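/- arXiv:2012.13795 — 2 statements merged into one kernel-verified Lean document; each statement's English description precedes it below -/
import Mathlib

section
/- The permutations 213 and 2431 form an annihilator pair: for every permutation τ and every pair of distinct indices i, j ≤ |τ|, the permutation τ_{i,j}[213, 2431] satisfies μ(1, τ_{i,j}[213, 2431]) = 0. -/
/-!
The permutation pattern poset and its Möbius function.

A permutation of length `n` is represented as an element of the symmetric
group on `Fin n`; the collection of all permutations of all lengths is the
sigma type `PPerm`.  Pattern containment `PPerm.Le` makes `PPerm` into the
permutation pattern poset, and `mu` is its Möbius function, defined by the
usual recursion `μ(σ,σ) = 1`, `μ(σ,π) = -∑_{σ ≤ λ < π} μ(σ,λ)` for `σ < π`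
and `μ(σ,π) = 0` otherwise.
-/

open scoped Classical

/-- A permutation of an arbitrary finite length `n`, as an element of the
symmetric group on `Fin n`. -/
abbrev PPerm : Type := Σ n : ℕ, Equiv.Perm (Fin n)

namespace PPerm

/-- Classical pattern containment `σ ≤ π`: there is a strictly increasing map
of positions along which `π` realises the same relative order as `σ`. -/
def Le (σ π : PPerm) : Prop :=
  ∃ f : Fin σ.1 → Fin π.1, StrictMono f ∧
    ∀ a b : Fin σ.1, σ.2 a < σ.2 b ↔ π.2 (f a) < π.2 (f b)

/-- Strict pattern containment. -/
def Lt (σ π : PPerm) : Prop := Le σ π ∧ σ ≠ π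

/-- The permutation `1` of length one. -/
def one : PPerm := ⟨1, 1⟩

/-- The direct sum `α ⊕ β` of two permutations: `β` is placed after and
above `α`. -/
def dsum (α β : PPerm) : PPerm :=
  ⟨α.1 + β.1, finSumFinEquiv.symm.trans ((Equiv.sumCongr α.2 β.2).trans finSumFinEquiv)⟩

end PPerm

/-- Fuelled recursion computing the Möbius function of the permutation
pattern poset.  Any `λ` with `σ ≤ λ < π` has length `< |π|`, so for any
fuel `≥ |π| + 1` this computes the standard recursion
`μ(σ,σ) = 1`, `μ(σ,π) = -∑_{σ ≤ λ < π} μ(σ,λ)` for `σ < π`, and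
`μ(σ,π) = 0` when `σ ≰ π`. -/
noncomputable def muAux : ℕ → PPerm → PPerm → ℤ
  | 0, _, _ => 0
  | n + 1, σ, π =>
    if σ = π then 1
    else if PPerm.Le σ π then
      - ∑ m ∈ Finset.range π.1,
          ∑ p ∈ Finset.univ.filter
              (fun p : Equiv.Perm (Fin m) => PPerm.Le σ ⟨m, p⟩ ∧ PPerm.Le ⟨m, p⟩ π),
            muAux n σ ⟨m, p⟩
    else 0

/-- The Möbius function of the permutation pattern poset. -/
noncomputable def mu (σ π : PPerm) : ℤ := muAux (π.1 + 1) σ π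

/-- The closed interval `[σ, π]` of the permutation pattern poset, as a
finset (any `λ ≤ π` has length `≤ |π|`). -/
noncomputable def intervalCC (σ π : PPerm) : Finset PPerm :=
  (Finset.range (π.1 + 1)).biUnion fun m =>
    (Finset.univ.filter fun p : Equiv.Perm (Fin m) =>
        PPerm.Le σ ⟨m, p⟩ ∧ PPerm.Le ⟨m, p⟩ π).image fun p => (⟨m, p⟩ : PPerm)

/-- The half-open interval `[σ, π)` of the permutation pattern poset. -/
noncomputable def intervalCO (σ π : PPerm) : Finset PPerm :=
  (intervalCC σ π).filter fun lam => lam ≠ π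

/-- `π` contains an interval copy of `α` occupying the contiguous positions
`i, i+1, …, i+|α|−1` (0-indexed): the values at these positions form a
contiguous range and the entries are order-isomorphic to `α`. -/
def HasIntervalCopyAt (π α : PPerm) (i : ℕ) : Prop :=
  ∃ (f : Fin α.1 → Fin π.1) (v : ℕ),
    (∀ a : Fin α.1, (f a : ℕ) = i + (a : ℕ)) ∧
    (∀ a : Fin α.1, v ≤ (π.2 (f a) : ℕ) ∧ (π.2 (f a) : ℕ) < v + α.1) ∧
    (∀ a b : Fin α.1, α.2 a < α.2 b ↔ π.2 (f a) < π.2 (f b))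

/-- The permutation `213` (0-indexed values `1 0 2`). -/
noncomputable def p213 : PPerm :=
  ⟨3, Equiv.ofBijective (![1, 0, 2] : Fin 3 → Fin 3) (by decide)⟩

/-- The permutation `2431` (0-indexed values `1 3 2 0`). -/
noncomputable def p2431 : PPerm :=
  ⟨4, Equiv.ofBijective (![1, 3, 2, 0] : Fin 4 → Fin 4) (by decide)⟩

/-!
The sum of `μ(1, l)` over all `l ≤ ρ` vanishes as soon as `ρ` has length at least two. Hence
`μ(1, π) = 0` whenever, on the permutations `l < π` with `μ(1, l) ≠ 0`, the indicator of `l ≤ π` is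
a fixed integer combination of the indicators of `l ≤ ρₖ`, for patterns `ρₖ < π` of length at least
two. For `π = τ_{i,j}[α, β]` such `ρₖ` are obtained by deleting entries of the two blocks. As a
block is an interval, an occurrence of `l` in `π` may be rearranged inside the block, and it then
avoids the deleted entries unless the trace of `l` on the block is one of a few bad patterns. A bad
trace contains an interval `12`, `21`, `321`, `213` or `2431`, which is an interval of `l` as well.
Since `μ(1, l) = 0` if `l` has an interval `321`, or intervals `12` and `21`, or, by induction,
intervals `213` and `2431`, every remaining `l` is handled by one of the three proper patterns
`τ_{i,j}[12, 231]`, `τ_{i,j}[21, 2431]` and `τ_{i,j}[213, 132]`, and inclusion–exclusion over these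
gives the combination.
-/

namespace PPerm

section Containment

variable {ρ σ π : PPerm}

/-- `f` sends the entries of `σ` to an occurrence of `σ` in `π`. -/
def IsEmbedding (σ π : PPerm) (f : Fin σ.1 → Fin π.1) : Prop :=
  StrictMono f ∧ ∀ a b, σ.2 a < σ.2 b ↔ π.2 (f a) < π.2 (f b)

lemma isEmbedding_of_lt {f : Fin σ.1 → Fin π.1} (hpos : StrictMono f)
    (hval : ∀ a b, σ.2 a < σ.2 b → π.2 (f a) < π.2 (f b)) : IsEmbedding σ π f := by
  have hmono : StrictMono fun v => π.2 (f (σ.2.symm v)) :=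
    fun u v huv => hval _ _ (by simpa using huv)
  exact ⟨hpos, fun a b => by simpa using (hmono.lt_iff_lt (a := σ.2 a) (b := σ.2 b)).symm⟩

lemma IsEmbedding.comp {g : Fin σ.1 → Fin π.1} {f : Fin ρ.1 → Fin σ.1}
    (hg : IsEmbedding σ π g) (hf : IsEmbedding ρ σ f) : IsEmbedding ρ π (g ∘ f) :=
  ⟨hg.1.comp hf.1, fun a b => (hf.2 a b).trans (hg.2 _ _)⟩

lemma Le.refl (π : PPerm) : Le π π := ⟨id, strictMono_id, fun _ _ => Iff.rfl⟩

lemma Le.trans : Le ρ σ → Le σ π → Le ρ π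
  | ⟨_, hf⟩, ⟨_, hg⟩ => ⟨_, IsEmbedding.comp hg hf⟩

lemma Le.length_le : Le σ π → σ.1 ≤ π.1
  | ⟨_, hf, _⟩ => by simpa using Fintype.card_le_of_injective _ hf.injective

lemma Le.eq_of_length_eq (h : Le σ π) (hlen : σ.1 = π.1) : σ = π := by
  obtain ⟨n, s⟩ := σ
  obtain ⟨m, p⟩ := π
  obtain rfl : n = m := hlen
  obtain ⟨f, hf, hval⟩ := h
  obtain rfl := hf.eq_id
  have hmono : StrictMono (p ∘ s.symm) :=
    fun u v huv => (hval (s.symm u) (s.symm v)).1 (by simpa using huv)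
  congr 1
  ext a
  simpa using (congrArg Fin.val (hmono.apply_eq (x := s a))).symm

lemma Lt.length_lt (h : Lt σ π) : σ.1 < π.1 :=
  h.1.length_le.lt_of_ne fun hlen => h.2 (h.1.eq_of_length_eq hlen)

lemma lt_of_le_of_length_lt (h : Le σ π) (hlen : σ.1 < π.1) : Lt σ π :=
  ⟨h, fun heq => hlen.ne (congrArg Sigma.fst heq)⟩

lemma one_lt (h : 2 ≤ π.1) : Lt one π := by
  refine lt_of_le_of_length_lt ⟨fun _ => ⟨0, by omega⟩, ?_, fun a b => ?_⟩ h
  · exact Subsingleton.strictMono (α := Fin 1) _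
  · simp [Subsingleton.elim (α := Fin 1) a b]

end Containment

section Mobius

variable {ρ σ π l : PPerm}

lemma mem_intervalCC : l ∈ intervalCC σ π ↔ Le σ l ∧ Le l π := by
  obtain ⟨n, p⟩ := l
  simp only [intervalCC, Finset.mem_biUnion, Finset.mem_range, Finset.mem_image,
    Finset.mem_filter, Finset.mem_univ, true_and]
  constructor
  · rintro ⟨m, -, q, hq, heq⟩
    exact heq ▸ hq
  · exact fun h => ⟨n, Nat.lt_succ_of_le h.2.length_le, p, h, rfl⟩

lemma mem_intervalCO : l ∈ intervalCO σ π ↔ Le σ l ∧ Lt l π := by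
  rw [intervalCO, Finset.mem_filter, mem_intervalCC, and_assoc, Lt]

lemma muAux_eq_mu {n : ℕ} (h : π.1 < n) : muAux n σ π = mu σ π := by
  induction n using Nat.strong_induction_on generalizing π with
  | _ n ih =>
    obtain rfl | hlt := (Nat.succ_le_of_lt h).eq_or_lt
    · rfl
    obtain ⟨k, rfl⟩ : ∃ k, n = k + 1 := ⟨n - 1, by omega⟩
    have hfuel (m : ℕ) (hm : m ∈ Finset.range π.1) (p : Equiv.Perm (Fin m)) :
        muAux k σ ⟨m, p⟩ = muAux π.1 σ ⟨m, p⟩ := by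
      have hm := Finset.mem_range.1 hm
      rw [ih k (by omega) (by simp only; omega), ih π.1 (by omega) hm]
    simp only [mu, muAux]
    rw [Finset.sum_congr rfl fun m hm => Finset.sum_congr rfl fun p _ => hfuel m hm p]

lemma mu_eq_neg_sum_intervalCO (h : Lt σ π) : mu σ π = -∑ l ∈ intervalCO σ π, mu σ l := by
  have hinterval : intervalCO σ π = (Finset.range π.1).sigma fun m =>
      Finset.univ.filter fun p : Equiv.Perm (Fin m) => Le σ ⟨m, p⟩ ∧ Le ⟨m, p⟩ π := by
    ext l
    simp only [mem_intervalCO, Finset.mem_sigma, Finset.mem_range, Finset.mem_filter,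
      Finset.mem_univ, true_and]
    exact ⟨fun hl => ⟨hl.2.length_lt, hl.1, hl.2.1⟩,
      fun hl => ⟨hl.2.1, lt_of_le_of_length_lt hl.2.2 hl.1⟩⟩
  rw [hinterval, Finset.sum_sigma, mu, muAux, if_neg h.2, if_pos h.1]
  refine congrArg _ (Finset.sum_congr rfl fun m hm => Finset.sum_congr rfl fun p _ => ?_)
  exact muAux_eq_mu (Finset.mem_range.1 hm)

lemma sum_mu_intervalCC_eq_zero (h : σ ≠ π) : ∑ l ∈ intervalCC σ π, mu σ l = 0 := by
  by_cases hle : Le σ π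
  · have hinsert : intervalCC σ π = insert π (intervalCO σ π) := by
      rw [intervalCO, Finset.filter_ne', Finset.insert_erase]
      exact mem_intervalCC.2 ⟨hle, Le.refl π⟩
    rw [hinsert, Finset.sum_insert (by simp [intervalCO]), mu_eq_neg_sum_intervalCO ⟨hle, h⟩,
      neg_add_cancel]
  · refine Finset.sum_eq_zero fun l hl => absurd ?_ hle
    exact (mem_intervalCC.1 hl).1.trans (mem_intervalCC.1 hl).2

/-- The zeta function of the permutation pattern poset. -/
noncomputable def zeta (σ π : PPerm) : ℤ := if Le σ π then 1 else 0

lemma zeta_congr (h : Le l ρ ↔ Le l π) : zeta l ρ = zeta l π := by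
  simp only [zeta, h]

lemma sum_zeta_mul_mu_eq_zero (hσ : σ ≠ ρ) (hρ : Lt ρ π) :
    ∑ l ∈ intervalCO σ π, zeta l ρ * mu σ l = 0 := by
  have hfilter : (intervalCO σ π).filter (Le · ρ) = intervalCC σ ρ := by
    ext l
    rw [Finset.mem_filter, mem_intervalCO, mem_intervalCC]
    exact ⟨fun h => ⟨h.1.1, h.2⟩, fun h => ⟨⟨h.1, lt_of_le_of_length_lt (h.2.trans hρ.1)
      (h.2.length_le.trans_lt hρ.length_lt)⟩, h.2⟩⟩
  simp only [zeta, ite_mul, one_mul, zero_mul]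
  rw [← Finset.sum_filter, hfilter, sum_mu_intervalCC_eq_zero hσ]

theorem mu_eq_zero_of_zeta_eq_sum {ι : Type*} [Fintype ι] (c : ι → ℤ) (ρ : ι → PPerm)
    (hπ : Lt σ π) (hσ : ∀ k, σ ≠ ρ k) (hρ : ∀ k, Lt (ρ k) π)
    (hzeta : ∀ l, Lt l π → mu σ l ≠ 0 → zeta l π = ∑ k, c k * zeta l (ρ k)) :
    mu σ π = 0 := by
  have hterm : ∀ l ∈ intervalCO σ π, mu σ l = ∑ k, c k * (zeta l (ρ k) * mu σ l) := by
    intro l hl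
    obtain hμ | hμ := eq_or_ne (mu σ l) 0
    · simp [hμ]
    · have hlt := (mem_intervalCO.1 hl).2
      have hone : zeta l π = 1 := if_pos hlt.1
      simp only [← mul_assoc, ← Finset.sum_mul, ← hzeta l hlt hμ, hone, one_mul]
  rw [mu_eq_neg_sum_intervalCO hπ, Finset.sum_congr rfl hterm, Finset.sum_comm]
  simp only [← Finset.mul_sum, sum_zeta_mul_mu_eq_zero (hσ _) (hρ _), mul_zero,
    Finset.sum_const_zero, neg_zero]

end Mobius

section Restrict

variable {σ π : PPerm} {S T : Finset (Fin π.1)}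

/-- The pattern of `π` formed by its entries at the positions in `S`. -/
noncomputable def restrict (π : PPerm) (S : Finset (Fin π.1)) : PPerm :=
  ⟨S.card, (S.orderIsoOfFin rfl).toEquiv.trans
    ((π.2.subtypeEquiv (q := (· ∈ S.map π.2.toEmbedding)) (by simp)).trans
      ((S.map π.2.toEmbedding).orderIsoOfFin (S.card_map _)).symm.toEquiv)⟩

lemma restrict_isEmbedding (π : PPerm) (S : Finset (Fin π.1)) :
    IsEmbedding (π.restrict S) π fun a => S.orderIsoOfFin rfl a := by
  refine ⟨fun a b hab => (S.orderIsoOfFin rfl).strictMono hab, fun a b => ?_⟩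
  exact ((S.map π.2.toEmbedding).orderIsoOfFin (S.card_map _)).symm.lt_iff_lt

lemma le_restrict_iff : Le σ (π.restrict S) ↔ ∃ f, IsEmbedding σ π f ∧ ∀ a, f a ∈ S := by
  constructor
  · rintro ⟨f, hf⟩
    exact ⟨_, (π.restrict_isEmbedding S).comp hf, fun a => (S.orderIsoOfFin rfl (f a)).2⟩
  · rintro ⟨f, hf, hS⟩
    let f' : Fin σ.1 → Fin (π.restrict S).1 := fun a => (S.orderIsoOfFin rfl).symm ⟨f a, hS a⟩
    have hf' (a : Fin σ.1) : (S.orderIsoOfFin rfl (f' a) : Fin π.1) = f a := by simp [f']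
    refine ⟨f', fun a b hab => (S.orderIsoOfFin rfl).symm.strictMono (hf.1 hab), fun a b => ?_⟩
    have hval := (π.restrict_isEmbedding S).2 (f' a) (f' b)
    simp only [hf'] at hval
    exact (hf.2 a b).trans hval.symm

lemma restrict_univ_le_iff : Le σ (π.restrict Finset.univ) ↔ Le σ π := by
  simp only [le_restrict_iff, Finset.mem_univ, implies_true, and_true]
  rfl

lemma restrict_mono (h : S ⊆ T) : Le (π.restrict S) (π.restrict T) :=
  le_restrict_iff.2 ⟨_, π.restrict_isEmbedding S, fun a => h (S.orderIsoOfFin rfl a).2⟩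

lemma restrict_lt (h : S ≠ Finset.univ) : Lt (π.restrict S) π := by
  refine lt_of_le_of_length_lt ⟨_, π.restrict_isEmbedding S⟩ ?_
  simpa [restrict] using Finset.card_lt_card (Finset.ssubset_univ_iff.2 h)

theorem mu_one_eq_zero_of_zeta_restrict {ι : Type*} [Fintype ι] [Nonempty ι] (c : ι → ℤ)
    (S : ι → Finset (Fin π.1)) (hcard : ∀ k, 1 < (S k).card) (hne : ∀ k, S k ≠ Finset.univ)
    (hzeta : ∀ l, l.1 < π.1 → mu one l ≠ 0 → zeta l π = ∑ k, c k * zeta l (π.restrict (S k))) :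
    mu one π = 0 := by
  have hrestrict (k : ι) : Lt one (π.restrict (S k)) := one_lt (hcard k)
  have hπ : 2 ≤ π.1 :=
    (hcard (Classical.arbitrary ι)).trans_le ((Finset.card_le_univ _).trans_eq (Fintype.card_fin _))
  exact mu_eq_zero_of_zeta_eq_sum c _ (one_lt hπ) (fun k => (hrestrict k).2)
    (fun k => restrict_lt (hne k)) fun l hl => hzeta l hl.length_lt

end Restrict

section OneSided

variable {ι ι' X X' Y : Type*} [Preorder Y]

/-- Each point of `S` outside the range of `g` is `κ`-below all of that range or `κ`-above all of
it. An interval of a permutation has this property both for `κ` the position and for `κ` the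
value. -/
def OneSided (κ : X → Y) (g : ι → X) (S : Finset X) : Prop :=
  ∀ x ∈ S, (∀ a, g a ≠ x) → (∀ a, κ x < κ (g a)) ∨ ∀ a, κ (g a) < κ x

instance [Fintype ι] [DecidableEq X] [DecidableLT Y] (κ : X → Y) (g : ι → X) (S : Finset X) :
    Decidable (OneSided κ g S) :=
  inferInstanceAs (Decidable
    (∀ x ∈ S, (∀ a, g a ≠ x) → (∀ a, κ x < κ (g a)) ∨ ∀ a, κ (g a) < κ x))

lemma OneSided.extend_lt_extend [Fintype X] {κ : X → Y} {g : ι → X}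
    (hκ : OneSided κ g Finset.univ) (hg : Function.Injective g) {u : ι → ι} {m : Finset ι}
    (hu : ∀ a ∈ m, ∀ b ∈ m, κ (g a) < κ (g b) → κ (g (u a)) < κ (g (u b))) {x y : X}
    (hx : ∀ a, g a = x → a ∈ m) (hy : ∀ a, g a = y → a ∈ m) (hxy : κ x < κ y) :
    κ (Function.extend g (g ∘ u) id x) < κ (Function.extend g (g ∘ u) id y) := by
  by_cases hxg : ∃ a, g a = x <;> by_cases hyg : ∃ b, g b = y
  · obtain ⟨a, rfl⟩ := hxg
    obtain ⟨b, rfl⟩ := hyg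
    simpa only [hg.extend_apply, Function.comp_apply] using hu a (hx a rfl) b (hy b rfl) hxy
  · obtain ⟨a, rfl⟩ := hxg
    rw [hg.extend_apply, Function.extend_apply' _ _ _ hyg]
    obtain h | h := hκ y (Finset.mem_univ y) (not_exists.1 hyg)
    · exact absurd (h a) hxy.asymm
    · exact h (u a)
  · obtain ⟨b, rfl⟩ := hyg
    rw [hg.extend_apply, Function.extend_apply' _ _ _ hxg]
    obtain h | h := hκ x (Finset.mem_univ x) (not_exists.1 hxg)
    · exact h (u b)
    · exact absurd (h b) hxy.asymm
  · simpa only [Function.extend_apply' _ _ _ hxg,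
      Function.extend_apply' _ _ _ hyg, id] using hxy

lemma OneSided.pullback {Y' Z : Type*} [Preorder Y'] [Preorder Z] [Fintype X] [Fintype X']
    {κ : X → Y} {κ' : X' → Y'} {κι : ι → Z} {f : X' → X} {g : ι → X}
    {c : ι' → ι} {g' : ι' → X'} {m : Finset ι}
    (hg : OneSided κ g Finset.univ) (hc : OneSided κι c m) (hfg : ∀ a, f (g' a) = g (c a))
    (hm : ∀ a x, f x = g a → a ∈ m) (hf : Function.Injective f)
    (hκf : ∀ x y, κ' x < κ' y ↔ κ (f x) < κ (f y)) (hκg : ∀ a b, κι a < κι b ↔ κ (g a) < κ (g b)) :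
    OneSided κ' g' Finset.univ := by
  intro x _ hx
  simp only [hκf, hfg]
  by_cases hxg : ∃ a, g a = f x
  · obtain ⟨a, ha⟩ := hxg
    simp only [← ha, ← hκg]
    exact hc a (hm a x ha.symm) fun b hb => hx b (hf (by rw [hfg, hb, ha]))
  · exact (hg (f x) (Finset.mem_univ _) (not_exists.1 hxg)).imp
      (fun h b => h (c b)) (fun h b => h (c b))

lemma OneSided.covBy [Fintype X] {Z : Type*} [Preorder Z] {κ : X → Y} {κι : ι → Z} {g : ι → X}
    {a b : ι} (hg : OneSided κ g Finset.univ) (hκ : Function.Surjective κ)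
    (hκg : ∀ a b, κι a < κι b ↔ κ (g a) < κ (g b)) (hab : κι a ⋖ κι b) : κ (g a) ⋖ κ (g b) := by
  refine ⟨(hκg a b).1 hab.1, fun y hay hyb => ?_⟩
  obtain ⟨x, rfl⟩ := hκ y
  by_cases hxg : ∃ c, g c = x
  · obtain ⟨c, rfl⟩ := hxg
    exact hab.2 ((hκg a c).2 hay) ((hκg c b).2 hyb)
  · obtain h | h := hg x (Finset.mem_univ x) (not_exists.1 hxg)
    · exact hay.asymm (h a)
    · exact hyb.asymm (h b)

end OneSided

section IntervalCopies

variable {α β π l : PPerm} {S : Finset (Fin π.1)} {g : Fin α.1 → Fin π.1}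

/-- `g` embeds `α` into the part of `π` at the positions in `S`, and its image is an interval of
that part. -/
structure IsIntervalCopyIn (α π : PPerm) (S : Finset (Fin π.1)) (g : Fin α.1 → Fin π.1) :
    Prop where
  isEmbedding : IsEmbedding α π g
  mem : ∀ a, g a ∈ S
  positions : OneSided id g S
  values : OneSided π.2 g S

/-- The part of `π` at the positions in `S` has an interval order-isomorphic to `α`. -/
def ContainsIntervalIn (α π : PPerm) (S : Finset (Fin π.1)) : Prop :=
  ∃ g, IsIntervalCopyIn α π S g

/-- `π` has an interval order-isomorphic to `α`. -/
abbrev ContainsInterval (α π : PPerm) : Prop := ContainsIntervalIn α π Finset.univ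

/-- The part of `α` at the positions in `m` is contained in the part at the positions in `M`. -/
def PartLe (α : PPerm) (m M : Finset (Fin α.1)) : Prop :=
  ∃ u : Fin α.1 → Fin α.1, ∀ a ∈ m, u a ∈ M ∧
    ∀ b ∈ m, (a < b → u a < u b) ∧ (α.2 a < α.2 b → α.2 (u a) < α.2 (u b))

/-- The subset `N` of `M` is such that every part of `α` inside `M` either has an interval from the
list `W` or is contained in the part `N`. For permutations without intervals in `W`, a block `α`
can then be thinned to `N` instead of `M`. -/
def ReducesAvoiding (W : List PPerm) (α : PPerm) (M N : Finset (Fin α.1)) : Prop :=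
  N ⊆ M ∧ ∀ m ⊆ M, (∃ β ∈ W, ContainsIntervalIn β α m) ∨ PartLe α m N

instance (σ π : PPerm) (f : Fin σ.1 → Fin π.1) : Decidable (IsEmbedding σ π f) :=
  inferInstanceAs (Decidable ((∀ a b, a < b → f a < f b) ∧
    ∀ a b, σ.2 a < σ.2 b ↔ π.2 (f a) < π.2 (f b)))

instance (α π : PPerm) (S : Finset (Fin π.1)) (g : Fin α.1 → Fin π.1) :
    Decidable (IsIntervalCopyIn α π S g) :=
  decidable_of_iff
    (IsEmbedding α π g ∧ (∀ a, g a ∈ S) ∧ OneSided id g S ∧ OneSided π.2 g S)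
    ⟨fun ⟨h₁, h₂, h₃, h₄⟩ => ⟨h₁, h₂, h₃, h₄⟩, fun ⟨h₁, h₂, h₃, h₄⟩ => ⟨h₁, h₂, h₃, h₄⟩⟩

instance (α π : PPerm) (S : Finset (Fin π.1)) : Decidable (ContainsIntervalIn α π S) :=
  inferInstanceAs (Decidable (∃ g, IsIntervalCopyIn α π S g))

instance (α : PPerm) (m M : Finset (Fin α.1)) : Decidable (PartLe α m M) :=
  inferInstanceAs (Decidable (∃ u : Fin α.1 → Fin α.1, ∀ a ∈ m, u a ∈ M ∧
    ∀ b ∈ m, (a < b → u a < u b) ∧ (α.2 a < α.2 b → α.2 (u a) < α.2 (u b))))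

instance (W : List PPerm) (α : PPerm) (M N : Finset (Fin α.1)) :
    Decidable (ReducesAvoiding W α M N) :=
  inferInstanceAs (Decidable (N ⊆ M ∧
    ∀ m ⊆ M, (∃ β ∈ W, ContainsIntervalIn β α m) ∨ PartLe α m N))

/-- The entries of the block `g` that are used by the map `f`. -/
noncomputable def trace (f : Fin l.1 → Fin π.1) (g : Fin α.1 → Fin π.1) : Finset (Fin α.1) :=
  Finset.univ.filter fun a => ∃ x, f x = g a

lemma mem_trace {f : Fin l.1 → Fin π.1} {a : Fin α.1} : a ∈ trace f g ↔ ∃ x, f x = g a := by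
  simp [trace]

lemma ContainsIntervalIn.containsInterval_of_trace {f : Fin l.1 → Fin π.1}
    (hc : ContainsIntervalIn β α (trace f g)) (hg : IsIntervalCopyIn α π Finset.univ g)
    (hf : IsEmbedding l π f) : ContainsInterval β l := by
  obtain ⟨c, hc⟩ := hc
  choose g' hg' using fun a => mem_trace.1 (hc.mem a)
  have hm (a : Fin α.1) (x : Fin l.1) (h : f x = g a) : a ∈ trace f g := mem_trace.2 ⟨x, h⟩
  refine ⟨g', ⟨fun a b hab => ?_, fun a b => ?_⟩, fun a => Finset.mem_univ _, ?_, ?_⟩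
  · rw [← hf.1.lt_iff_lt, hg', hg']
    exact hg.isEmbedding.1 (hc.isEmbedding.1 hab)
  · rw [hf.2, hg', hg', ← hg.isEmbedding.2, hc.isEmbedding.2]
  · exact hg.positions.pullback (κ' := id) (κι := id) hc.positions hg' hm hf.1.injective
      (fun _ _ => hf.1.lt_iff_lt.symm) (fun _ _ => hg.isEmbedding.1.lt_iff_lt.symm)
  · exact hg.values.pullback hc.values hg' hm hf.1.injective hf.2 hg.isEmbedding.2

lemma PartLe.exists_isEmbedding_of_trace {f : Fin l.1 → Fin π.1} {N : Finset (Fin α.1)}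
    (hN : PartLe α (trace f g) N) (hg : IsIntervalCopyIn α π Finset.univ g)
    (hf : IsEmbedding l π f) :
    ∃ f', IsEmbedding l π f' ∧
      ∀ x, (∃ a ∈ N, g a = f' x) ∨ (f' x = f x ∧ ∀ a, g a ≠ f' x) := by
  obtain ⟨u, hu⟩ := hN
  have hginj := hg.isEmbedding.1.injective
  have hx (x : Fin l.1) (a : Fin α.1) (h : g a = f x) : a ∈ trace f g := mem_trace.2 ⟨x, h.symm⟩
  refine ⟨fun x => Function.extend g (g ∘ u) id (f x), isEmbedding_of_lt ?_ ?_, fun x => ?_⟩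
  · refine fun x y hxy =>
      hg.positions.extend_lt_extend hginj (fun a ha b hb hab => ?_) (hx x) (hx y) (hf.1 hxy)
    exact hg.isEmbedding.1 (((hu a ha).2 b hb).1 (hg.isEmbedding.1.lt_iff_lt.1 hab))
  · refine fun x y hxy => hg.values.extend_lt_extend hginj (fun a ha b hb hab => ?_)
      (hx x) (hx y) ((hf.2 x y).1 hxy)
    exact (hg.isEmbedding.2 _ _).1 (((hu a ha).2 b hb).2 ((hg.isEmbedding.2 _ _).2 hab))
  · by_cases hfx : ∃ a, g a = f x
    · obtain ⟨a, ha⟩ := hfx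
      refine Or.inl ⟨u a, (hu a (hx x a ha)).1, ?_⟩
      simp only [← ha, hginj.extend_apply, Function.comp_apply]
    · right
      simpa only [Function.extend_apply' _ _ _ hfx, id, true_and] using not_exists.1 hfx

/-- The positions that remain when the part of the block `g` outside `M` is deleted. -/
noncomputable def thin (g : Fin α.1 → Fin π.1) (M : Finset (Fin α.1)) : Finset (Fin π.1) :=
  (Mᶜ.image g)ᶜ

lemma mem_thin {M : Finset (Fin α.1)} {x : Fin π.1} : x ∈ thin g M ↔ ∀ a, g a = x → a ∈ M := by
  simp only [thin, Finset.mem_compl, Finset.mem_image, not_exists, not_and, not_imp_not]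

lemma mem_thin_of_forall_ne {M : Finset (Fin α.1)} {x : Fin π.1} (h : ∀ a, g a ≠ x) :
    x ∈ thin g M :=
  mem_thin.2 fun a ha => absurd ha (h a)

lemma IsEmbedding.apply_mem_thin (hg : IsEmbedding α π g) {M : Finset (Fin α.1)} {a : Fin α.1}
    (ha : a ∈ M) : g a ∈ thin g M :=
  mem_thin.2 fun _ hb => hg.1.injective hb ▸ ha

lemma IsEmbedding.card_le_card_thin (hg : IsEmbedding α π g) (M : Finset (Fin α.1)) :
    M.card ≤ (thin g M).card :=
  Finset.card_le_card_of_injOn g (fun _ ha => hg.apply_mem_thin ha) hg.1.injective.injOn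

lemma thin_univ : thin g Finset.univ = Finset.univ := by
  simp [thin]

lemma thin_mono {M N : Finset (Fin α.1)} (h : N ⊆ M) : thin g N ⊆ thin g M :=
  fun _ hx => mem_thin.2 fun a ha => h (mem_thin.1 hx a ha)

lemma thin_ne_univ {M : Finset (Fin α.1)} (h : M ≠ Finset.univ) : thin g M ≠ Finset.univ := by
  contrapose! h
  exact Finset.eq_univ_of_forall fun a => mem_thin.1 (h ▸ Finset.mem_univ (g a)) a rfl

theorem le_restrict_thin_iff {W : List PPerm} {M N : Finset (Fin α.1)}
    (hg : IsIntervalCopyIn α π Finset.univ g) (hS : ∀ a, g a ∈ S)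
    (hW : ∀ β ∈ W, ¬ContainsInterval β l) (hMN : ReducesAvoiding W α M N) :
    Le l (π.restrict (thin g M ∩ S)) ↔ Le l (π.restrict (thin g N ∩ S)) := by
  refine ⟨fun h => ?_,
    fun h => h.trans (restrict_mono (Finset.inter_subset_inter_right (thin_mono hMN.1)))⟩
  obtain ⟨f, hf, hmem⟩ := le_restrict_iff.1 h
  have htrace : trace f g ⊆ M := by
    intro a ha
    obtain ⟨x, hx⟩ := mem_trace.1 ha
    exact mem_thin.1 (Finset.mem_inter.1 (hmem x)).1 a hx.symm
  obtain ⟨β, hβ, hint⟩ | hle := hMN.2 _ htrace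
  · exact absurd (hint.containsInterval_of_trace hg hf) (hW β hβ)
  · obtain ⟨f', hf', hor⟩ := hle.exists_isEmbedding_of_trace hg hf
    refine le_restrict_iff.2 ⟨f', hf', fun x => Finset.mem_inter.2 ?_⟩
    obtain ⟨a, ha, hax⟩ | ⟨heq, hout⟩ := hor x
    · rw [← hax]
      exact ⟨hg.isEmbedding.apply_mem_thin ha, hS a⟩
    · exact ⟨mem_thin_of_forall_ne hout, heq ▸ (Finset.mem_inter.1 (hmem x)).2⟩

end IntervalCopies

section Patterns

variable {α π : PPerm}

lemma forall_lt_or_forall_gt_of_forall_ne {k v y : ℕ} {φ : Fin k → ℕ} (hφ : Function.Injective φ)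
    (hrange : ∀ a, v ≤ φ a ∧ φ a < v + k) (hy : ∀ a, φ a ≠ y) :
    (∀ a, y < φ a) ∨ ∀ a, φ a < y := by
  have himage : Finset.univ.image φ = Finset.Ico v (v + k) := by
    refine Finset.eq_of_subset_of_card_le (fun x hx => ?_) ?_
    · obtain ⟨a, -, rfl⟩ := Finset.mem_image.1 hx
      exact Finset.mem_Ico.2 (hrange a)
    · simp [Finset.card_image_of_injective _ hφ]
  have hout : y ∉ Finset.Ico v (v + k) := by
    rw [← himage]
    simpa using hy
  rw [Finset.mem_Ico, not_and_or, not_le, not_lt] at hout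
  exact hout.imp (fun h a => h.trans_le (hrange a).1) (fun h a => (hrange a).2.trans_le h)

lemma containsInterval_of_hasIntervalCopyAt {i : ℕ} (h : HasIntervalCopyAt π α i) :
    ContainsInterval α π := by
  obtain ⟨f, v, hpos, hval, hord⟩ := h
  have hmono : StrictMono f := fun a b hab => Fin.lt_def.2 (by rw [hpos, hpos]; omega)
  refine ⟨f, ⟨hmono, hord⟩, fun a => Finset.mem_univ _, fun x _ hx => ?_, fun x _ hx => ?_⟩
  · refine forall_lt_or_forall_gt_of_forall_ne (v := i) (Fin.val_injective.comp hmono.injective)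
      (fun a => ?_) fun a => Fin.val_ne_iff.2 (hx a)
    change i ≤ (f a : ℕ) ∧ (f a : ℕ) < i + α.1
    rw [hpos]
    omega
  · exact forall_lt_or_forall_gt_of_forall_ne (v := v)
      (Fin.val_injective.comp (π.2.injective.comp hmono.injective)) hval
      fun a => Fin.val_ne_iff.2 (π.2.injective.ne (hx a))

section Consecutive

variable {g : Fin α.1 → Fin π.1} {a b : Fin α.1}

lemma IsIntervalCopyIn.position_add_one (hg : IsIntervalCopyIn α π Finset.univ g)
    (hab : (a : ℕ) + 1 = b) : (g a : ℕ) + 1 = g b := by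
  have hcov : id a ⋖ id b := Fin.covBy_iff.2 (Nat.covBy_iff_add_one_eq.2 hab)
  exact Nat.covBy_iff_add_one_eq.1 (Fin.covBy_iff.1
    (hg.positions.covBy Function.surjective_id (fun _ _ => hg.isEmbedding.1.lt_iff_lt.symm) hcov))

lemma IsIntervalCopyIn.value_add_one (hg : IsIntervalCopyIn α π Finset.univ g)
    (hab : (α.2 a : ℕ) + 1 = α.2 b) : (π.2 (g a) : ℕ) + 1 = π.2 (g b) := by
  have hcov : α.2 a ⋖ α.2 b := Fin.covBy_iff.2 (Nat.covBy_iff_add_one_eq.2 hab)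
  exact Nat.covBy_iff_add_one_eq.1 (Fin.covBy_iff.1
    (hg.values.covBy π.2.surjective hg.isEmbedding.2 hcov))

end Consecutive

/-- The permutation `12`. -/
def p12 : PPerm := ⟨2, 1⟩

/-- The permutation `21`. -/
def p21 : PPerm := ⟨2, Equiv.swap 0 1⟩

/-- The permutation `321`. -/
def p321 : PPerm := ⟨3, Fin.revPerm⟩

lemma ne_of_isIntervalCopyIn_p12_p21 {g h : Fin 2 → Fin π.1}
    (hg : IsIntervalCopyIn p12 π Finset.univ g) (hh : IsIntervalCopyIn p21 π Finset.univ h)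
    (a b : Fin 2) : g a ≠ h b := by
  have hgpos : (g 0 : ℕ) + 1 = g 1 := hg.position_add_one (by decide)
  have hgval : (π.2 (g 0) : ℕ) + 1 = π.2 (g 1) := hg.value_add_one (by decide)
  have hhpos : (h 0 : ℕ) + 1 = h 1 := hh.position_add_one (by decide)
  have hhval : (π.2 (h 1) : ℕ) + 1 = π.2 (h 0) := hh.value_add_one (by decide)
  have hiff (x y : Fin 2) : (g x : ℕ) = h y ↔ (π.2 (g x) : ℕ) = π.2 (h y) := by
    rw [Fin.val_inj, Fin.val_inj, π.2.injective.eq_iff]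
  suffices ¬((g a : ℕ) = h b ∧ (π.2 (g a) : ℕ) = π.2 (h b)) from
    fun hab => this (by simp only [hab, and_self])
  -- A common entry fixes both offsets between the two blocks; some `g x` and `h y` then agree in
  -- exactly one of position and value.
  match a, b with
  | 0, 0 => have := hiff 1 1; omega
  | 0, 1 => have := hiff 1 0; omega
  | 1, 0 => have := hiff 0 1; omega
  | 1, 1 => have := hiff 0 0; omega

lemma ne_of_isIntervalCopyIn_p213_p2431 {g : Fin 3 → Fin π.1} {h : Fin 4 → Fin π.1}
    (hg : IsIntervalCopyIn p213 π Finset.univ g) (hh : IsIntervalCopyIn p2431 π Finset.univ h)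
    (a : Fin 3) (b : Fin 4) : g a ≠ h b := by
  have hgpos₁ : (g 0 : ℕ) + 1 = g 1 := hg.position_add_one (by decide)
  have hgpos₂ : (g 1 : ℕ) + 1 = g 2 := hg.position_add_one (by decide)
  have hgval₁ : (π.2 (g 1) : ℕ) + 1 = π.2 (g 0) := hg.value_add_one (by decide)
  have hgval₂ : (π.2 (g 0) : ℕ) + 1 = π.2 (g 2) := hg.value_add_one (by decide)
  have hhpos₁ : (h 0 : ℕ) + 1 = h 1 := hh.position_add_one (by decide)
  have hhpos₂ : (h 1 : ℕ) + 1 = h 2 := hh.position_add_one (by decide)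
  have hhpos₃ : (h 2 : ℕ) + 1 = h 3 := hh.position_add_one (by decide)
  have hhval₁ : (π.2 (h 3) : ℕ) + 1 = π.2 (h 0) := hh.value_add_one (by decide)
  have hhval₂ : (π.2 (h 0) : ℕ) + 1 = π.2 (h 2) := hh.value_add_one (by decide)
  have hhval₃ : (π.2 (h 2) : ℕ) + 1 = π.2 (h 1) := hh.value_add_one (by decide)
  have hiff (x : Fin 3) (y : Fin 4) : (g x : ℕ) = h y ↔ (π.2 (g x) : ℕ) = π.2 (h y) := by
    rw [Fin.val_inj, Fin.val_inj, π.2.injective.eq_iff]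
  suffices ¬((g a : ℕ) = h b ∧ (π.2 (g a) : ℕ) = π.2 (h b)) from
    fun hab => this (by simp only [hab, and_self])
  match a, b with
  | 0, 0 | 0, 2 | 2, 2 => have := hiff 1 3; omega
  | 0, 1 | 1, 2 => have := hiff 2 3; omega
  | 0, 3 => have := hiff 2 0; omega
  | 1, 0 | 2, 1 => have := hiff 0 2; omega
  | 1, 1 | 1, 3 => have := hiff 0 0; omega
  | 2, 0 => have := hiff 0 3; omega
  | 2, 3 => have := hiff 0 1; omega

end Patterns

section BlockPairs

/-- `g` and `h` embed `α` and `β` as disjoint intervals of `π`, that is, `π` is an inflation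
`τ_{i,j}[α, β]`. -/
structure IsBlockPair (α β π : PPerm) (g : Fin α.1 → Fin π.1) (h : Fin β.1 → Fin π.1) :
    Prop where
  left : IsIntervalCopyIn α π Finset.univ g
  right : IsIntervalCopyIn β π Finset.univ h
  disjoint : ∀ a b, g a ≠ h b

variable {α β π l : PPerm} {W : List PPerm} {g : Fin α.1 → Fin π.1} {h : Fin β.1 → Fin π.1}

lemma IsBlockPair.symm (hgh : IsBlockPair α β π g h) : IsBlockPair β α π h g :=
  ⟨hgh.right, hgh.left, fun b a => (hgh.disjoint a b).symm⟩

/-- The pattern of `π = τ_{i,j}[α, β]` in which the blocks `α` and `β` are thinned to their parts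
`M` and `M'`. -/
noncomputable def thinned (g : Fin α.1 → Fin π.1) (h : Fin β.1 → Fin π.1) (M : Finset (Fin α.1))
    (M' : Finset (Fin β.1)) : PPerm :=
  π.restrict (thin g M ∩ thin h M')

lemma thinned_comm (M : Finset (Fin α.1)) (M' : Finset (Fin β.1)) :
    thinned g h M M' = thinned h g M' M := by
  rw [thinned, thinned, Finset.inter_comm]

lemma IsBlockPair.zeta_thinned_left {M N : Finset (Fin α.1)} (hgh : IsBlockPair α β π g h)
    (hMN : ReducesAvoiding W α M N) (hW : ∀ γ ∈ W, ¬ContainsInterval γ l)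
    (M' : Finset (Fin β.1)) : zeta l (thinned g h M M') = zeta l (thinned g h N M') :=
  zeta_congr (le_restrict_thin_iff hgh.left
    (fun a => mem_thin_of_forall_ne fun b => (hgh.disjoint a b).symm) hW hMN)

lemma IsBlockPair.zeta_thinned_right {M' N' : Finset (Fin β.1)} (hgh : IsBlockPair α β π g h)
    (hMN : ReducesAvoiding W β M' N') (hW : ∀ γ ∈ W, ¬ContainsInterval γ l)
    (M : Finset (Fin α.1)) : zeta l (thinned g h M M') = zeta l (thinned g h M N') := by
  simpa only [thinned_comm M] using hgh.symm.zeta_thinned_left hMN hW M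

theorem IsBlockPair.mu_one_eq_zero {ι : Type*} [Fintype ι] [Nonempty ι]
    (hgh : IsBlockPair α β π g h) (c : ι → ℤ) (M : ι → Finset (Fin α.1))
    (M' : ι → Finset (Fin β.1))
    (hne : ∀ k, (M k).Nonempty ∧ (M' k).Nonempty ∧ (M k ≠ Finset.univ ∨ M' k ≠ Finset.univ))
    (hzeta : ∀ l, l.1 < π.1 → mu one l ≠ 0 → zeta l (thinned g h Finset.univ Finset.univ) =
      ∑ k, c k * zeta l (thinned g h (M k) (M' k))) :
    mu one π = 0 := by
  refine mu_one_eq_zero_of_zeta_restrict c (fun k => thin g (M k) ∩ thin h (M' k))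
    (fun k => ?_) (fun k => ?_) fun l hlen hμ => ?_
  · obtain ⟨⟨a, ha⟩, ⟨b, hb⟩, -⟩ := hne k
    refine Finset.one_lt_card.2 ⟨g a, Finset.mem_inter.2 ⟨?_, ?_⟩, h b,
      Finset.mem_inter.2 ⟨?_, ?_⟩, hgh.disjoint a b⟩
    · exact hgh.left.isEmbedding.apply_mem_thin ha
    · exact mem_thin_of_forall_ne fun b' => (hgh.disjoint a b').symm
    · exact mem_thin_of_forall_ne fun a' => hgh.disjoint a' b
    · exact hgh.right.isEmbedding.apply_mem_thin hb
  · rw [Ne, Finset.inter_eq_univ, not_and_or]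
    exact (hne k).2.2.imp thin_ne_univ thin_ne_univ
  · have huniv : Le l (thinned g h Finset.univ Finset.univ) ↔ Le l π := by
      rw [thinned, thin_univ, thin_univ, Finset.inter_self, restrict_univ_le_iff]
    rw [← zeta_congr huniv, hzeta l hlen hμ]
    rfl

end BlockPairs

section Reductions

/-- The positions of `α`, counted from `0`, that lie in `s`. -/
def part {α : PPerm} (s : Finset ℕ) : Finset (Fin α.1) :=
  Finset.univ.filter fun a => (a : ℕ) ∈ s

lemma reducesAvoiding_p12 : ReducesAvoiding [p12] p12 Finset.univ (part {0}) := by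
  decide +kernel

lemma reducesAvoiding_p21 : ReducesAvoiding [p21] p21 Finset.univ (part {0}) := by
  decide +kernel

lemma reducesAvoiding_p321 : ReducesAvoiding [p321] p321 Finset.univ (part {0, 1}) := by
  decide +kernel

lemma reducesAvoiding_p213_p21 : ReducesAvoiding [p21] p213 Finset.univ (part {0, 2}) := by
  decide +kernel

lemma reducesAvoiding_p213_p12_p213 :
    ReducesAvoiding [p12, p213] p213 Finset.univ (part {0, 1}) := by
  decide +kernel

lemma reducesAvoiding_p213_part_p21 : ReducesAvoiding [p21] p213 (part {0, 1}) (part {0}) := by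
  decide +kernel

lemma reducesAvoiding_p213_part_p12 : ReducesAvoiding [p12] p213 (part {0, 2}) (part {0}) := by
  decide +kernel

lemma reducesAvoiding_p2431_p21 :
    ReducesAvoiding [p21] p2431 Finset.univ (part {0, 1, 3}) := by
  decide +kernel

lemma reducesAvoiding_p2431_p12_p321_p2431 :
    ReducesAvoiding [p12, p321, p2431] p2431 Finset.univ (part {0, 1, 2}) := by
  decide +kernel

lemma reducesAvoiding_p2431_part_p21 :
    ReducesAvoiding [p21] p2431 (part {0, 1, 2}) (part {0, 1}) := by
  decide +kernel

end Reductions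

section Vanishing

variable {π : PPerm}

theorem mu_one_eq_zero_of_containsInterval_p321 (h : ContainsInterval p321 π) :
    mu one π = 0 := by
  induction hn : π.1 using Nat.strong_induction_on generalizing π with
  | _ n ih =>
    obtain ⟨g, hg⟩ := h
    refine mu_one_eq_zero_of_zeta_restrict (ι := Unit) (fun _ => 1)
      (fun _ => thin g (part {0, 1}) ∩ Finset.univ) (fun _ => ?_) (fun _ => ?_) fun l hlen hμ => ?_
    · rw [Finset.inter_univ]
      exact (by decide : 1 < (part {0, 1} : Finset (Fin p321.1)).card).trans_le
        (hg.isEmbedding.card_le_card_thin _)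
    · rw [Finset.inter_univ]
      exact thin_ne_univ (by decide)
    · have hl : ¬ContainsInterval p321 l := fun hl => hμ (ih _ (hn ▸ hlen) hl rfl)
      have hle := le_restrict_thin_iff hg (fun a => Finset.mem_univ (g a)) (by simpa using hl)
        reducesAvoiding_p321
      rw [thin_univ, Finset.inter_univ, restrict_univ_le_iff] at hle
      simpa only [Finset.univ_unique, Finset.sum_const, Finset.card_singleton, one_smul, one_mul]
        using zeta_congr hle

theorem mu_one_eq_zero_of_containsInterval_p12_p21 (h₁₂ : ContainsInterval p12 π)
    (h₂₁ : ContainsInterval p21 π) : mu one π = 0 := by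
  induction hn : π.1 using Nat.strong_induction_on generalizing π with
  | _ n ih =>
    obtain ⟨g, hg⟩ := h₁₂
    obtain ⟨h, hh⟩ := h₂₁
    have hgh : IsBlockPair p12 p21 π g h := ⟨hg, hh, ne_of_isIntervalCopyIn_p12_p21 hg hh⟩
    refine hgh.mu_one_eq_zero ![1, 1, -1] ![part {0}, Finset.univ, part {0}]
      ![Finset.univ, part {0}, part {0}] (by decide) fun l hlen hμ => ?_
    have hl : ¬(ContainsInterval p12 l ∧ ContainsInterval p21 l) :=
      fun hl => hμ (ih _ (hn ▸ hlen) hl.1 hl.2 rfl)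
    simp only [Fin.sum_univ_three, Matrix.cons_val]
    obtain hl | hl := not_and_or.1 hl
    · have hleft := hgh.zeta_thinned_left reducesAvoiding_p12 (by simpa using hl)
      linear_combination hleft Finset.univ - hleft (part {0})
    · have hright := hgh.zeta_thinned_right reducesAvoiding_p21 (by simpa using hl)
      linear_combination hright Finset.univ - hright (part {0})

variable {l : PPerm} {g : Fin p213.1 → Fin π.1} {h : Fin p2431.1 → Fin π.1}

/-- The parts of `213` kept in the inclusion–exclusion over the three thinnings of `τ[213, 2431]`
with parts `({0, 2}, {0, 1, 3})`, `({0, 1}, univ)` and `(univ, {0, 1, 2})`. -/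
noncomputable def cutLeft : Fin 7 → Finset (Fin p213.1) :=
  ![part {0, 2}, part {0, 1}, Finset.univ, part {0}, part {0, 2}, part {0, 1}, part {0}]

/-- The parts of `2431` kept in the inclusion–exclusion described at `cutLeft`. -/
noncomputable def cutRight : Fin 7 → Finset (Fin p2431.1) :=
  ![part {0, 1, 3}, Finset.univ, part {0, 1, 2}, part {0, 1, 3}, part {0, 1}, part {0, 1, 2},
    part {0, 1}]

/-- The signs of the inclusion–exclusion described at `cutLeft`. -/
def cutSign : Fin 7 → ℤ := ![1, 1, 1, -1, -1, -1, 1]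

lemma IsBlockPair.zeta_eq_sum_cuts_of_not_p21 (hgh : IsBlockPair p213 p2431 π g h)
    (h₂₁ : ¬ContainsInterval p21 l) : zeta l (thinned g h Finset.univ Finset.univ) =
      ∑ k, cutSign k * zeta l (thinned g h (cutLeft k) (cutRight k)) := by
  have havoid : ∀ β ∈ [p21], ¬ContainsInterval β l := by simpa using h₂₁
  have hleft := hgh.zeta_thinned_left reducesAvoiding_p213_p21 havoid
  have hleft' := hgh.zeta_thinned_left reducesAvoiding_p213_part_p21 havoid
  have hright := hgh.zeta_thinned_right reducesAvoiding_p2431_p21 havoid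
  have hright' := hgh.zeta_thinned_right reducesAvoiding_p2431_part_p21 havoid
  simp only [Fin.sum_univ_seven, cutSign, cutLeft, cutRight, Matrix.cons_val, hleft, hleft', hright,
    hright']
  ring

lemma IsBlockPair.zeta_eq_sum_cuts_of_not_p12_p213 (hgh : IsBlockPair p213 p2431 π g h)
    (h₁₂ : ¬ContainsInterval p12 l) (h₂₁₃ : ¬ContainsInterval p213 l) :
    zeta l (thinned g h Finset.univ Finset.univ) =
      ∑ k, cutSign k * zeta l (thinned g h (cutLeft k) (cutRight k)) := by
  have hleft := hgh.zeta_thinned_left reducesAvoiding_p213_p12_p213 (by simpa using ⟨h₁₂, h₂₁₃⟩)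
  have hleft' := hgh.zeta_thinned_left reducesAvoiding_p213_part_p12 (by simpa using h₁₂)
  simp only [Fin.sum_univ_seven, cutSign, cutLeft, cutRight, Matrix.cons_val, hleft, hleft']
  ring

lemma IsBlockPair.zeta_eq_sum_cuts_of_not_p12_p321_p2431 (hgh : IsBlockPair p213 p2431 π g h)
    (h₁₂ : ¬ContainsInterval p12 l) (h₃₂₁ : ¬ContainsInterval p321 l)
    (h₂₄₃₁ : ¬ContainsInterval p2431 l) : zeta l (thinned g h Finset.univ Finset.univ) =
      ∑ k, cutSign k * zeta l (thinned g h (cutLeft k) (cutRight k)) := by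
  have hleft := hgh.zeta_thinned_left reducesAvoiding_p213_part_p12 (by simpa using h₁₂)
  have hright := hgh.zeta_thinned_right reducesAvoiding_p2431_p12_p321_p2431
    (by simpa using ⟨h₁₂, h₃₂₁, h₂₄₃₁⟩)
  simp only [Fin.sum_univ_seven, cutSign, cutLeft, cutRight, Matrix.cons_val, hleft, hright]
  ring

theorem mu_one_eq_zero_of_containsInterval_p213_p2431 (h₂₁₃ : ContainsInterval p213 π)
    (h₂₄₃₁ : ContainsInterval p2431 π) : mu one π = 0 := by
  induction hn : π.1 using Nat.strong_induction_on generalizing π with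
  | _ n ih =>
    obtain ⟨g, hg⟩ := h₂₁₃
    obtain ⟨h, hh⟩ := h₂₄₃₁
    have hgh : IsBlockPair p213 p2431 π g h := ⟨hg, hh, ne_of_isIntervalCopyIn_p213_p2431 hg hh⟩
    refine hgh.mu_one_eq_zero cutSign cutLeft cutRight (by decide) fun l hlen hμ => ?_
    by_cases h₂₁ : ContainsInterval p21 l
    · have h₁₂ : ¬ContainsInterval p12 l :=
        fun h₁₂ => hμ (mu_one_eq_zero_of_containsInterval_p12_p21 h₁₂ h₂₁)
      have h₃₂₁ : ¬ContainsInterval p321 l :=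
        fun h₃₂₁ => hμ (mu_one_eq_zero_of_containsInterval_p321 h₃₂₁)
      by_cases h₂₁₃ : ContainsInterval p213 l
      · exact hgh.zeta_eq_sum_cuts_of_not_p12_p321_p2431 h₁₂ h₃₂₁
          fun h₂₄₃₁ => hμ (ih _ (hn ▸ hlen) h₂₁₃ h₂₄₃₁ rfl)
      · exact hgh.zeta_eq_sum_cuts_of_not_p12_p213 h₁₂ h₂₁₃
    · exact hgh.zeta_eq_sum_cuts_of_not_p21 h₂₁

end Vanishing

end PPerm

/-- **(Theorem `thm-pair`.)**  The permutations `213` and `2431` form an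
annihilator pair: any permutation of the form `τ_{i,j}[213, 2431]`, i.e. any
permutation containing an interval copy of `213` and an interval copy of
`2431` on disjoint sets of positions, has `μ(1,·) = 0`. -/
theorem annihilator_pair_213_2431 (π : PPerm) (i j : ℕ)
    (h213 : HasIntervalCopyAt π p213 i) (h2431 : HasIntervalCopyAt π p2431 j)
    (hdisj : i + 3 ≤ j ∨ j + 4 ≤ i) :
    mu PPerm.one π = 0 := by
  exact PPerm.mu_one_eq_zero_of_containsInterval_p213_p2431
    (PPerm.containsInterval_of_hasIntervalCopyAt h213)
    (PPerm.containsInterval_of_hasIntervalCopyAt h2431)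
end

section
/- If σ is an adjacency-free permutation and π is a permutation containing an interval copy of one of the permutations 1243, 2134, 3421, 4312 (the symmetries of 1243 under reversal, complementation and inversion), then μ(σ,π) = 0. -/
/-!
The permutation pattern poset and its Möbius function.

A permutation of length `n` is represented as an element of the symmetric
group on `Fin n`; the collection of all permutations of all lengths is the
sigma type `PPerm`.  Pattern containment `PPerm.Le` makes `PPerm` into the
permutation pattern poset, and `mu` is its Möbius function, defined by the
usual recursion `μ(σ,σ) = 1`, `μ(σ,π) = -∑_{σ ≤ λ < π} μ(σ,λ)` for `σ < π`
and `μ(σ,π) = 0` otherwise.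
-/

open scoped Classical

/-- `π` contains an interval copy of `α`: there is a set of `|α|` contiguous
positions of `π` (starting at position `i`), whose values form a contiguous
range (starting at value `v`), and whose entries are order-isomorphic
to `α`. -/
def HasIntervalCopy (π α : PPerm) : Prop :=
  ∃ (f : Fin α.1 → Fin π.1) (i v : ℕ),
    (∀ a : Fin α.1, (f a : ℕ) = i + (a : ℕ)) ∧
    (∀ a : Fin α.1, v ≤ (π.2 (f a) : ℕ) ∧ (π.2 (f a) : ℕ) < v + α.1) ∧
    (∀ a b : Fin α.1, α.2 a < α.2 b ↔ π.2 (f a) < π.2 (f b))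

/-- Position `i` starts an adjacency of `π`: `|π(i+1) − π(i)| = 1`. -/
def AdjAtPos (π : PPerm) (i : Fin π.1) : Prop :=
  ∃ j : Fin π.1, (j : ℕ) = (i : ℕ) + 1 ∧
    ((π.2 j : ℕ) = (π.2 i : ℕ) + 1 ∨ (π.2 i : ℕ) = (π.2 j : ℕ) + 1)

/-- `σ` is adjacency-free: it has no adjacency. -/
def AdjacencyFree (σ : PPerm) : Prop := ∀ i : Fin σ.1, ¬ AdjAtPos σ i

/-- The permutation `1243` (0-indexed values `0 1 3 2`). -/
noncomputable def p1243 : PPerm :=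
  ⟨4, Equiv.ofBijective (![0, 1, 3, 2] : Fin 4 → Fin 4) (by decide)⟩

/-- The permutation `2134` (0-indexed values `1 0 2 3`). -/
noncomputable def p2134 : PPerm :=
  ⟨4, Equiv.ofBijective (![1, 0, 2, 3] : Fin 4 → Fin 4) (by decide)⟩

/-- The permutation `3421` (0-indexed values `2 3 1 0`). -/
noncomputable def p3421 : PPerm :=
  ⟨4, Equiv.ofBijective (![2, 3, 1, 0] : Fin 4 → Fin 4) (by decide)⟩

/-- The permutation `4312` (0-indexed values `3 2 0 1`). -/
noncomputable def p4312 : PPerm :=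
  ⟨4, Equiv.ofBijective (![3, 2, 0, 1] : Fin 4 → Fin 4) (by decide)⟩

/-!
Let `ρ < π` be obtained by deleting an entry `e` from `π`. If an adjacency survives in `ρ`, then the
adjacency-free `σ` is neither `ρ` nor `π`, so `∑_{λ ≤ π} μ(σ, λ)` and `∑_{λ ≤ ρ} μ(σ, λ)` both
vanish, and `μ(σ, π) = 0` as soon as `μ(σ, λ) = 0` for every `λ < π` that is not contained in `ρ`.
Such a `λ` uses `e` in each of its occurrences in `π`. If `e` is part of an adjacency `e f`, the
two entries are interchangeable in any occurrence using only one of them, so every occurrence of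
`λ` uses both, and the adjacency is inherited by `λ`.

By induction, `μ(σ, π) = 0` whenever `π` has two overlapping adjacencies `ab` and `bc`: take
`e = a`; then `λ` again has overlapping adjacencies. In an interval copy `abcd` of `1243`, delete
`a`. If some occurrence of `λ` avoids `c`, then `b` and `d` become adjacent in `λ`, which has the
overlapping adjacencies `ab` and `bd`; otherwise every occurrence uses all of `abcd` and induction
applies.
-/

theorem mem_uIoo_apply_iff_of_strictMono {α β : Type*} [LinearOrder α] [LinearOrder β]
    {f : α → β} (hf : StrictMono f) {a b x : α} :
    f x ∈ Set.uIoo (f a) (f b) ↔ x ∈ Set.uIoo a b := by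
  simp only [Set.uIoo, ← hf.monotone.map_inf, ← hf.monotone.map_sup, Set.mem_Ioo, hf.lt_iff_lt]

theorem strictMonoOn_swap {α : Type*} [LinearOrder α] (j k : α) :
    StrictMonoOn (Equiv.swap j k) (insert k (Set.uIoo j k))ᶜ := by
  intro x hx y hy hxy
  simp only [Set.mem_compl_iff, Set.mem_insert_iff, Set.uIoo_eq_union, Set.mem_union,
    Set.mem_Ioo] at hx hy
  grind

theorem ordConnected_range_of_mem_Ico {k n v : ℕ} {g : Fin k → Fin n} (hg : Function.Injective g)
    (hv : ∀ a, (g a : ℕ) ∈ Finset.Ico v (v + k)) : (Set.range g).OrdConnected := by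
  have himage : Finset.univ.image (fun a => (g a : ℕ)) = Finset.Ico v (v + k) := by
    refine Finset.eq_of_subset_of_card_le (Finset.image_subset_iff.2 fun a _ => hv a) ?_
    have hcard : (Finset.univ.image fun a => (g a : ℕ)).card = k := by
      rw [Finset.card_image_of_injective _ fun a b hab => hg (Fin.ext hab), Finset.card_fin]
    rw [hcard, Nat.card_Ico, Nat.add_sub_cancel_left]
  refine ⟨?_⟩
  rintro _ ⟨a, rfl⟩ _ ⟨b, rfl⟩ y hy
  have hyv : (y : ℕ) ∈ Finset.Ico v (v + k) := by
    have ha := Finset.mem_Ico.1 (hv a)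
    have hb := Finset.mem_Ico.1 (hv b)
    exact Finset.mem_Ico.2 ⟨ha.1.trans hy.1, lt_of_le_of_lt hy.2 hb.2⟩
  rw [← himage, Finset.mem_image] at hyv
  obtain ⟨c, -, hc⟩ := hyv
  exact ⟨c, Fin.ext hc⟩

namespace PPerm

variable {σ τ ρ π α : PPerm}

/-- The map `f` of positions witnesses an occurrence of the pattern `τ` in `π`. -/
structure IsEmbedding_s12 (τ π : PPerm) (f : Fin τ.1 → Fin π.1) : Prop where
  strictMono : StrictMono f
  lt_iff_lt : ∀ a b, τ.2 a < τ.2 b ↔ π.2 (f a) < π.2 (f b)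

namespace IsEmbedding_s12

variable {f : Fin τ.1 → Fin π.1}

theorem le (hf : IsEmbedding_s12 τ π f) : Le τ π := ⟨f, hf.strictMono, hf.lt_iff_lt⟩

theorem strictMono_val (hf : IsEmbedding_s12 τ π f) : StrictMono (π.2 ∘ f ∘ τ.2.symm) :=
  fun x y hxy => (hf.lt_iff_lt _ _).1 (by simpa using hxy)

theorem mem_uIoo_val_iff (hf : IsEmbedding_s12 τ π f) {a b x : Fin τ.1} :
    π.2 (f x) ∈ Set.uIoo (π.2 (f a)) (π.2 (f b)) ↔ τ.2 x ∈ Set.uIoo (τ.2 a) (τ.2 b) := by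
  simpa using mem_uIoo_apply_iff_of_strictMono hf.strictMono_val
    (a := τ.2 a) (b := τ.2 b) (x := τ.2 x)

end IsEmbedding_s12

theorem exists_isEmbedding_of_le (h : Le τ π) : ∃ f, IsEmbedding_s12 τ π f := by
  obtain ⟨f, hf, hfval⟩ := h
  exact ⟨f, hf, hfval⟩

theorem length_le_of_le (h : Le τ π) : τ.1 ≤ π.1 := by
  obtain ⟨f, hf⟩ := exists_isEmbedding_of_le h
  simpa using Fintype.card_le_of_injective f hf.strictMono.injective

theorem eq_of_le_of_length_le (h : Le τ π) (hlen : π.1 ≤ τ.1) : τ = π := by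
  have hlen' : τ.1 = π.1 := (length_le_of_le h).antisymm hlen
  obtain ⟨f, hf⟩ := exists_isEmbedding_of_le h
  obtain ⟨m, p⟩ := τ
  obtain ⟨n, q⟩ := π
  obtain rfl : m = n := hlen'
  have hf_id : f = id := hf.strictMono.le_id.antisymm hf.strictMono.id_le
  have hval_id : q ∘ f ∘ p.symm = id := hf.strictMono_val.le_id.antisymm hf.strictMono_val.id_le
  have hpq : p = q := Equiv.ext fun x => by
    simpa [hf_id] using (congrFun hval_id (p x)).symm
  rw [hpq]

instance : PartialOrder PPerm where
  le := Le
  le_refl π := ⟨id, strictMono_id, fun _ _ => Iff.rfl⟩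
  le_trans _ _ _ := fun ⟨f, hf, hfval⟩ ⟨g, hg, hgval⟩ =>
    ⟨g ∘ f, hg.comp hf, fun a b => (hfval a b).trans (hgval _ _)⟩
  le_antisymm _ _ h h' := eq_of_le_of_length_le h (length_le_of_le h')

theorem strictMono_length : StrictMono (Sigma.fst : PPerm → ℕ) := fun _ _ h =>
  lt_of_not_ge fun hlen => h.ne (eq_of_le_of_length_le h.le hlen)

instance : WellFoundedLT PPerm := strictMono_length.wellFoundedLT

noncomputable instance : LocallyFiniteOrderBot PPerm :=
  .ofIic PPerm
    (fun π => (Finset.range (π.1 + 1)).sigma fun m =>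
      {p : Equiv.Perm (Fin m) | (⟨m, p⟩ : PPerm) ≤ π})
    fun π τ => by
      simp only [Finset.mem_sigma, Finset.mem_range, Finset.mem_filter, Finset.mem_univ, true_and,
        Nat.lt_succ_iff]
      exact and_iff_right_of_imp length_le_of_le

theorem muAux_eq_of_length_lt {n m : ℕ} (hn : π.1 < n) (hm : π.1 < m) :
    muAux n σ π = muAux m σ π := by
  induction n generalizing m π with
  | zero => omega
  | succ n ih =>
    obtain ⟨m, rfl⟩ := Nat.exists_eq_succ_of_ne_zero (Nat.ne_zero_of_lt hm)
    have hsum : ∀ k ∈ Finset.range π.1, ∀ p : Equiv.Perm (Fin k),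
        muAux n σ ⟨k, p⟩ = muAux m σ ⟨k, p⟩ := by
      intro k hk p
      rw [Finset.mem_range] at hk
      exact ih (by grind) (by grind)
    simp only [muAux]
    rw [Finset.sum_congr rfl fun k hk => Finset.sum_congr rfl fun p _ => hsum k hk p]

theorem mu_eq_zero_of_not_le (h : ¬ σ ≤ π) : mu σ π = 0 := by
  have hne : σ ≠ π := fun heq => h heq.le
  rw [mu, muAux, if_neg hne, if_neg (show ¬ Le σ π from h)]

theorem mu_eq_neg_sum_Iio (h : σ ≠ π) : mu σ π = -∑ τ ∈ Finset.Iio π, mu σ τ := by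
  by_cases hle : σ ≤ π
  · rw [mu, muAux, if_neg h, if_pos (show Le σ π from hle), neg_inj, Finset.sum_sigma']
    refine Finset.sum_subset_zero_on_sdiff ?_ ?_ ?_ <;> intro τ hτ
    · simp only [Finset.mem_sigma, Finset.mem_range, Finset.mem_filter, Finset.mem_univ,
        true_and] at hτ
      exact Finset.mem_Iio.2 (lt_of_le_of_ne hτ.2.2 fun heq => hτ.1.ne (congrArg Sigma.fst heq))
    · simp only [Finset.mem_sdiff, Finset.mem_Iio, Finset.mem_sigma, Finset.mem_range,
        Finset.mem_filter, Finset.mem_univ, true_and] at hτ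
      exact mu_eq_zero_of_not_le fun hστ => hτ.2 ⟨strictMono_length hτ.1, hστ, hτ.1.le⟩
    · exact muAux_eq_of_length_lt (Finset.mem_range.1 (Finset.mem_sigma.1 hτ).1) τ.1.lt_succ_self
  · rw [mu_eq_zero_of_not_le hle, Finset.sum_eq_zero, neg_zero]
    exact fun τ hτ => mu_eq_zero_of_not_le fun hστ => hle (hστ.trans (Finset.mem_Iio.1 hτ).le)

theorem sum_Iic_mu_eq_zero (h : σ ≠ π) : ∑ τ ∈ Finset.Iic π, mu σ τ = 0 := by
  rw [← Finset.Iio_insert, Finset.sum_insert (by simp), mu_eq_neg_sum_Iio h, neg_add_cancel]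

theorem mu_eq_zero_of_forall_not_le (hρ : ρ < π) (hσρ : σ ≠ ρ) (hσπ : σ ≠ π)
    (h : ∀ τ < π, ¬ τ ≤ ρ → mu σ τ = 0) : mu σ π = 0 := by
  have hsub : Finset.Iic ρ ⊆ Finset.Iio π := fun τ hτ =>
    Finset.mem_Iio.2 ((Finset.mem_Iic.1 hτ).trans_lt hρ)
  rw [mu_eq_neg_sum_Iio hσπ, ← Finset.sum_subset hsub fun τ hτ hτρ =>
    h τ (Finset.mem_Iio.1 hτ) (Finset.mem_Iic.not.1 hτρ), sum_Iic_mu_eq_zero hσρ, neg_zero]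

theorem exists_isEmbedding_range_eq (π : PPerm) (t : Set (Fin π.1)) :
    ∃ (ρ : PPerm) (g : Fin ρ.1 → Fin π.1), IsEmbedding_s12 ρ π g ∧ Set.range g = t := by
  lift t to Finset (Fin π.1) using t.toFinite
  let pos := t.orderIsoOfFin rfl
  let val := (t.map π.2.toEmbedding).orderIsoOfFin (Finset.card_map _)
  let entry : t ≃ t.map π.2.toEmbedding := π.2.subtypeEquiv fun x => by simp
  refine ⟨⟨t.card, (pos.toEquiv.trans entry).trans val.symm.toEquiv⟩, fun a => pos a,
    ⟨fun a b hab => pos.strictMono hab, fun a b => val.symm.lt_iff_lt⟩, ?_⟩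
  ext x
  exact ⟨fun ⟨a, ha⟩ => ha ▸ (pos a).2, fun hx => ⟨pos.symm ⟨x, hx⟩, by simp⟩⟩

/-- The pattern `τ` has an occurrence in `π` using no position in `s`; equivalently, `τ` is
contained in the permutation obtained from `π` by deleting the entries at the positions in `s`. -/
def LeAvoiding (τ π : PPerm) (s : Set (Fin π.1)) : Prop :=
  ∃ f, IsEmbedding_s12 τ π f ∧ ∀ i, f i ∉ s

/-- Once the entries at the positions in `s` are deleted from `π`, the entries at the positions `a`
and `b` form an adjacency, in either order. -/
structure AdjacentMod (π : PPerm) (s : Set (Fin π.1)) (a b : Fin π.1) : Prop where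
  ne : a ≠ b
  pos : Set.uIoo a b ⊆ s
  val : π.2 ⁻¹' Set.uIoo (π.2 a) (π.2 b) ⊆ s

section LeAvoiding

variable {s t : Set (Fin π.1)} {a b e : Fin π.1}

theorem LeAvoiding.mono (h : LeAvoiding τ π t) (hst : s ⊆ t) : LeAvoiding τ π s := by
  obtain ⟨f, hf, hft⟩ := h
  exact ⟨f, hf, fun i hi => hft i (hst hi)⟩

theorem IsEmbedding_s12.exists_apply_eq {f : Fin τ.1 → Fin π.1} (hf : IsEmbedding_s12 τ π f)
    (h : ¬ LeAvoiding τ π {e}) : ∃ i, f i = e := by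
  by_contra! hne
  exact h ⟨f, hf, hne⟩

theorem le_of_leAvoiding {g : Fin ρ.1 → Fin π.1} (hg : IsEmbedding_s12 ρ π g)
    (h : LeAvoiding τ π (Set.range g)ᶜ) : τ ≤ ρ := by
  obtain ⟨f, hf, hfg⟩ := h
  choose k hk using fun i => Set.notMem_compl_iff.1 (hfg i)
  refine ⟨k, fun i j hij => ?_, fun i j => ?_⟩
  · rw [← hg.strictMono.lt_iff_lt, hk, hk]
    exact hf.strictMono hij
  · rw [hf.lt_iff_lt, hg.lt_iff_lt, hk, hk]

/-- In an occurrence using `a` but not `b`, the entry at `a` can be replaced by the one at `b`. -/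
theorem LeAvoiding.swap (h : LeAvoiding τ π (insert b s)) (hab : AdjacentMod π s a b)
    (hb : b ∉ s) : LeAvoiding τ π (insert a s) := by
  obtain ⟨f, hf, hfs⟩ := h
  have hpos : ∀ i, f i ∈ (insert b (Set.uIoo a b))ᶜ := fun i hi =>
    hfs i (Set.insert_subset_insert hab.pos hi)
  have hval : ∀ i, π.2 (f i) ∈ (insert (π.2 b) (Set.uIoo (π.2 a) (π.2 b)))ᶜ := fun i hi =>
    hfs i (hi.imp (fun h => π.2.injective h) (fun h => hab.val h))
  refine ⟨Equiv.swap a b ∘ f, ⟨fun i j hij => ?_, fun i j => ?_⟩, fun i => ?_⟩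
  · exact strictMonoOn_swap a b (hpos i) (hpos j) (hf.strictMono hij)
  · simp only [Function.comp_apply, ← π.2.injective.swap_apply]
    rw [(strictMonoOn_swap _ _).lt_iff_lt (hval i) (hval j), hf.lt_iff_lt]
  · have hi := hfs i
    have hne := hab.ne
    grind

theorem LeAvoiding.of_adjacentMod_empty (h : LeAvoiding τ π {b}) (hab : AdjacentMod π ∅ a b) :
    LeAvoiding τ π {a} := by
  rw [← insert_empty_eq] at h ⊢
  exact h.swap hab (Set.notMem_empty b)

end LeAvoiding

namespace AdjacentMod

variable {s t : Set (Fin π.1)} {a b : Fin π.1}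

theorem mono (h : AdjacentMod π s a b) (hst : s ⊆ t) : AdjacentMod π t a b :=
  ⟨h.ne, h.pos.trans hst, h.val.trans hst⟩

theorem of_map {f : Fin τ.1 → Fin π.1} (hf : IsEmbedding_s12 τ π f) {i j : Fin τ.1}
    (h : AdjacentMod π s (f i) (f j)) : AdjacentMod τ (f ⁻¹' s) i j where
  ne hij := h.ne (congrArg f hij)
  pos _ hx := h.pos ((mem_uIoo_apply_iff_of_strictMono hf.strictMono).2 hx)
  val _ hx := h.val (hf.mem_uIoo_val_iff.2 hx)

theorem map {f : Fin α.1 → Fin π.1} (hf : IsEmbedding_s12 α π f) (hpos : (Set.range f).OrdConnected)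
    (hval : (Set.range (π.2 ∘ f)).OrdConnected) {s : Set (Fin α.1)} {i j : Fin α.1}
    (h : AdjacentMod α s i j) : AdjacentMod π (f '' s) (f i) (f j) where
  ne := hf.strictMono.injective.ne h.ne
  pos x hx := by
    obtain ⟨y, rfl⟩ := hpos.uIcc_subset ⟨i, rfl⟩ ⟨j, rfl⟩ (Set.uIoo_subset_uIcc_self hx)
    exact ⟨y, h.pos ((mem_uIoo_apply_iff_of_strictMono hf.strictMono).1 hx), rfl⟩
  val x hx := by
    obtain ⟨y, hy⟩ := hval.uIcc_subset ⟨i, rfl⟩ ⟨j, rfl⟩ (Set.uIoo_subset_uIcc_self hx)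
    obtain rfl := π.2.injective hy
    exact ⟨y, h.val (hf.mem_uIoo_val_iff.1 hx), rfl⟩

end AdjacentMod

theorem val_eq_succ_or_of_uIoo_eq_empty {n : ℕ} {u v : Fin n} (hne : u ≠ v)
    (h : Set.uIoo u v = ∅) : (v : ℕ) = u + 1 ∨ (u : ℕ) = v + 1 := by
  wlog huv : u < v generalizing u v
  · exact (this hne.symm (Set.uIoo_comm u v ▸ h) (hne.lt_or_gt.resolve_left huv)).symm
  rw [Set.uIoo_of_lt huv] at h
  have hcov : u ⋖ v := ⟨huv, fun x hux hxv => Set.eq_empty_iff_forall_notMem.1 h x ⟨hux, hxv⟩⟩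
  exact .inl (by simpa using hcov : (u : ℕ) + 1 = v).symm

theorem not_adjacentMod_empty_of_adjacencyFree (hσ : AdjacencyFree σ) (a b : Fin σ.1) :
    ¬ AdjacentMod σ ∅ a b := by
  intro h
  have hval_empty : Set.uIoo (σ.2 a) (σ.2 b) = ∅ := Set.eq_empty_of_forall_notMem fun y hy =>
    Set.notMem_empty (σ.2.symm y) (h.val (by simpa using hy))
  have hval := val_eq_succ_or_of_uIoo_eq_empty (σ.2.injective.ne h.ne) hval_empty
  rcases val_eq_succ_or_of_uIoo_eq_empty h.ne (Set.subset_empty_iff.1 h.pos) with hb | ha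
  · exact hσ a ⟨b, hb, hval⟩
  · exact hσ b ⟨a, ha, hval.symm⟩

theorem mu_eq_zero_of_forall_not_leAvoiding (hσ : AdjacencyFree σ) {e a b : Fin π.1}
    (hab : AdjacentMod π ∅ a b) (ha : a ≠ e) (hb : b ≠ e)
    (h : ∀ τ < π, ¬ LeAvoiding τ π {e} → mu σ τ = 0) : mu σ π = 0 := by
  obtain ⟨ρ, g, hg, hrange⟩ := exists_isEmbedding_range_eq π {e}ᶜ
  have hσπ : σ ≠ π := by
    rintro rfl
    exact not_adjacentMod_empty_of_adjacencyFree hσ a b hab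
  have hσρ : σ ≠ ρ := by
    rintro rfl
    obtain ⟨i, rfl⟩ : a ∈ Set.range g := hrange ▸ ha
    obtain ⟨j, rfl⟩ : b ∈ Set.range g := hrange ▸ hb
    exact not_adjacentMod_empty_of_adjacencyFree hσ i j (hab.of_map hg)
  have hρπ : ρ < π := by
    refine lt_of_le_of_ne hg.le ?_
    rintro rfl
    obtain ⟨i, hi⟩ := Finite.surjective_of_injective hg.strictMono.injective e
    exact hrange.subset (Set.mem_range_self i) hi
  refine mu_eq_zero_of_forall_not_le hρπ hσρ hσπ fun τ hτ hτρ => h τ hτ fun hav => hτρ ?_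
  exact le_of_leAvoiding hg (by rwa [hrange, compl_compl])

theorem mu_eq_zero_of_overlapping_adjacencies (hσ : AdjacencyFree σ) {a b c : Fin π.1}
    (hac : a ≠ c) (hab : AdjacentMod π ∅ a b) (hbc : AdjacentMod π ∅ b c) : mu σ π = 0 := by
  induction π using WellFoundedLT.induction with
  | ind π ih =>
    refine mu_eq_zero_of_forall_not_leAvoiding hσ hbc hab.ne.symm hac.symm fun τ hτ hτa => ?_
    have hτb : ¬ LeAvoiding τ π {b} := fun h => hτa (h.of_adjacentMod_empty hab)
    have hτc : ¬ LeAvoiding τ π {c} := fun h => hτb (h.of_adjacentMod_empty hbc)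
    obtain ⟨f, hf⟩ := exists_isEmbedding_of_le hτ.le
    obtain ⟨a, rfl⟩ := hf.exists_apply_eq hτa
    obtain ⟨b, rfl⟩ := hf.exists_apply_eq hτb
    obtain ⟨c, rfl⟩ := hf.exists_apply_eq hτc
    exact ih τ hτ (ne_of_apply_ne f hac) (hab.of_map hf) (hbc.of_map hf)

/-- Two adjacencies `a b` and `c d` such that `b` and `d` become adjacent once `c` is deleted. The
entries of an interval copy of `1243`, in this order, are the model case. -/
structure LinkedAdjacencies (π : PPerm) (a b c d : Fin π.1) : Prop where
  ne_ac : a ≠ c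
  ne_ad : a ≠ d
  ab : AdjacentMod π ∅ a b
  cd : AdjacentMod π ∅ c d
  bd : AdjacentMod π {c} b d

namespace LinkedAdjacencies

theorem map {f : Fin α.1 → Fin π.1} (hf : IsEmbedding_s12 α π f) (hpos : (Set.range f).OrdConnected)
    (hval : (Set.range (π.2 ∘ f)).OrdConnected) {a b c d : Fin α.1}
    (h : LinkedAdjacencies α a b c d) : LinkedAdjacencies π (f a) (f b) (f c) (f d) where
  ne_ac := hf.strictMono.injective.ne h.ne_ac
  ne_ad := hf.strictMono.injective.ne h.ne_ad
  ab := by simpa using h.ab.map hf hpos hval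
  cd := by simpa using h.cd.map hf hpos hval
  bd := by simpa using h.bd.map hf hpos hval

theorem of_map {f : Fin τ.1 → Fin π.1} (hf : IsEmbedding_s12 τ π f) {a b c d : Fin τ.1}
    (h : LinkedAdjacencies π (f a) (f b) (f c) (f d)) : LinkedAdjacencies τ a b c d where
  ne_ac := ne_of_apply_ne f h.ne_ac
  ne_ad := ne_of_apply_ne f h.ne_ad
  ab := h.ab.of_map hf
  cd := h.cd.of_map hf
  bd := (h.bd.of_map hf).mono fun _ hx => hf.strictMono.injective hx

variable {a b c d : Fin π.1}

theorem mu_eq_zero_of_leAvoiding (h : LinkedAdjacencies π a b c d) (hσ : AdjacencyFree σ)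
    (hτa : ¬ LeAvoiding τ π {a}) (hτc : LeAvoiding τ π {c}) : mu σ τ = 0 := by
  have hτb : ¬ LeAvoiding τ π {b} := fun hb => hτa (hb.of_adjacentMod_empty h.ab)
  have hτcd : ¬ LeAvoiding τ π {d, c} := fun hcd =>
    hτb ((hcd.swap h.bd h.cd.ne.symm).mono (by simp))
  obtain ⟨f, hf, hfc⟩ := hτc
  have hfc_empty : f ⁻¹' {c} = ∅ := Set.eq_empty_of_forall_notMem hfc
  obtain ⟨a, rfl⟩ := hf.exists_apply_eq hτa
  obtain ⟨b, rfl⟩ := hf.exists_apply_eq hτb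
  obtain ⟨d, rfl⟩ : ∃ i, f i = d := by
    by_contra! hd
    exact hτcd ⟨f, hf, fun i hi => hi.elim (hd i) (hfc i)⟩
  exact mu_eq_zero_of_overlapping_adjacencies hσ (ne_of_apply_ne f h.ne_ad)
    (h.ab.of_map hf) (hfc_empty ▸ h.bd.of_map hf)

theorem mu_eq_zero (h : LinkedAdjacencies π a b c d) (hσ : AdjacencyFree σ) : mu σ π = 0 := by
  induction π using WellFoundedLT.induction with
  | ind π ih =>
    refine mu_eq_zero_of_forall_not_leAvoiding hσ h.cd h.ne_ac.symm h.ne_ad.symm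
      fun τ hτ hτa => ?_
    by_cases hτc : LeAvoiding τ π {c}
    · exact h.mu_eq_zero_of_leAvoiding hσ hτa hτc
    have hτb : ¬ LeAvoiding τ π {b} := fun hb => hτa (hb.of_adjacentMod_empty h.ab)
    have hτd : ¬ LeAvoiding τ π {d} := fun hd => hτc (hd.of_adjacentMod_empty h.cd)
    obtain ⟨f, hf⟩ := exists_isEmbedding_of_le hτ.le
    obtain ⟨a, rfl⟩ := hf.exists_apply_eq hτa
    obtain ⟨b, rfl⟩ := hf.exists_apply_eq hτb
    obtain ⟨c, rfl⟩ := hf.exists_apply_eq hτc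
    obtain ⟨d, rfl⟩ := hf.exists_apply_eq hτd
    exact ih τ hτ (h.of_map hf)

end LinkedAdjacencies

theorem exists_isEmbedding_of_hasIntervalCopy (h : HasIntervalCopy π α) :
    ∃ f, IsEmbedding_s12 α π f ∧ (Set.range f).OrdConnected ∧ (Set.range (π.2 ∘ f)).OrdConnected := by
  obtain ⟨f, i, v, hpos, hval, hlt⟩ := h
  have hf : StrictMono f := fun a b hab => by
    rw [Fin.lt_def, hpos, hpos]
    exact Nat.add_lt_add_left hab i
  refine ⟨f, ⟨hf, hlt⟩, ordConnected_range_of_mem_Ico (v := i) hf.injective fun a => ?_,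
    ordConnected_range_of_mem_Ico (v := v) (π.2.injective.comp hf.injective) fun a =>
      Finset.mem_Ico.2 (hval a)⟩
  rw [hpos]
  exact Finset.mem_Ico.2 ⟨Nat.le_add_right _ _, Nat.add_lt_add_left a.2 i⟩

theorem mu_eq_zero_of_hasIntervalCopy (hσ : AdjacencyFree σ) (h : HasIntervalCopy π α)
    {a b c d : Fin α.1} (hα : LinkedAdjacencies α a b c d) : mu σ π = 0 := by
  obtain ⟨f, hf, hpos, hval⟩ := exists_isEmbedding_of_hasIntervalCopy h
  exact (hα.map hf hpos hval).mu_eq_zero hσ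

theorem linkedAdjacencies_ofBijective {n : ℕ} {u : Fin n → Fin n} (hu : Function.Bijective u)
    {a b c d : Fin n} (hne : a ≠ c ∧ a ≠ d)
    (hab : a ≠ b ∧ ∀ x, x ∉ Set.Ioo (min a b) (max a b) ∧
      u x ∉ Set.Ioo (min (u a) (u b)) (max (u a) (u b)))
    (hcd : c ≠ d ∧ ∀ x, x ∉ Set.Ioo (min c d) (max c d) ∧
      u x ∉ Set.Ioo (min (u c) (u d)) (max (u c) (u d)))
    (hbd : b ≠ d ∧ ∀ x, x ∈ Set.Ioo (min b d) (max b d) ∨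
      u x ∈ Set.Ioo (min (u b) (u d)) (max (u b) (u d)) → x = c) :
    LinkedAdjacencies ⟨n, .ofBijective u hu⟩ a b c d where
  ne_ac := hne.1
  ne_ad := hne.2
  ab := ⟨hab.1, fun x hx => (hab.2 x).1 hx, fun x hx => (hab.2 x).2 hx⟩
  cd := ⟨hcd.1, fun x hx => (hcd.2 x).1 hx, fun x hx => (hcd.2 x).2 hx⟩
  bd := ⟨hbd.1, fun x hx => hbd.2 x (.inl hx), fun x hx => hbd.2 x (.inr hx)⟩

theorem linkedAdjacencies_p1243 :
    LinkedAdjacencies p1243 (0 : Fin 4) (1 : Fin 4) (2 : Fin 4) (3 : Fin 4) :=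
  linkedAdjacencies_ofBijective _ (by decide) (by decide) (by decide) (by decide)

theorem linkedAdjacencies_p4312 :
    LinkedAdjacencies p4312 (0 : Fin 4) (1 : Fin 4) (2 : Fin 4) (3 : Fin 4) :=
  linkedAdjacencies_ofBijective _ (by decide) (by decide) (by decide) (by decide)

theorem linkedAdjacencies_p2134 :
    LinkedAdjacencies p2134 (3 : Fin 4) (2 : Fin 4) (1 : Fin 4) (0 : Fin 4) :=
  linkedAdjacencies_ofBijective _ (by decide) (by decide) (by decide) (by decide)

theorem linkedAdjacencies_p3421 :
    LinkedAdjacencies p3421 (3 : Fin 4) (2 : Fin 4) (1 : Fin 4) (0 : Fin 4) :=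
  linkedAdjacencies_ofBijective _ (by decide) (by decide) (by decide) (by decide)

end PPerm

/-- If `σ` is adjacency-free and `π` contains an interval copy of one of the
symmetries `1243`, `2134`, `3421`, `4312` of `1243`, then `μ(σ,π) = 0`. -/
theorem mu_eq_zero_of_adjacencyFree_of_intervalCopy_1243 (σ π : PPerm)
    (hσ : AdjacencyFree σ)
    (h : HasIntervalCopy π p1243 ∨ HasIntervalCopy π p2134 ∨
      HasIntervalCopy π p3421 ∨ HasIntervalCopy π p4312) :
    mu σ π = 0 := by
  rcases h with h | h | h | h
  · exact PPerm.mu_eq_zero_of_hasIntervalCopy hσ h PPerm.linkedAdjacencies_p1243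
  · exact PPerm.mu_eq_zero_of_hasIntervalCopy hσ h PPerm.linkedAdjacencies_p2134
  · exact PPerm.mu_eq_zero_of_hasIntervalCopy hσ h PPerm.linkedAdjacencies_p3421
  · exact PPerm.mu_eq_zero_of_hasIntervalCopy hσ h PPerm.linkedAdjacencies_p4312
end
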